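/- Let Γ be a strongly connected digraphon on a probability space (Ω,μ) with peripheral multiplicity D. Then the partition Ω = P₀ ⊔ P₁ ⊔ … ⊔ P_{D−1} witnessing graphical D-periodicity is unique up to a cyclic shift: if Ω = Q₀ ⊔ Q₁ ⊔ … ⊔ Q_{D−1} is another measurable partition witnessing graphical D-periodicity, then there exists s ∈ ℤ such that for all i,j ∈ {0,…,D−1}, P_i equals Q_j up to a μ-null set if and only if i ≡ j + s (mod D). -/

import Mathlib

open MeasureTheory Filter Set Topology
open scoped ENNReal Real Function

namespace Digraphon

variable {Ω : Type*} [MeasurableSpace Ω]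

/-- `kpowAux μ Γ n` is the `(n+1)`-st kernel power of `Γ`. -/
noncomputable def kpowAux (μ : Measure Ω) (Γ : Ω → Ω → ℝ) : ℕ → Ω → Ω → ℝ
  | 0 => Γ
  | n + 1 => fun x y => ∫ z, Γ x z * kpowAux μ Γ n z y ∂μ

/-- `dpow μ Γ k` is the `k`-th kernel power of `Γ` (intended for `k ≥ 1`). -/
noncomputable def dpow (μ : Measure Ω) (Γ : Ω → Ω → ℝ) (k : ℕ) : Ω → Ω → ℝ :=
  kpowAux μ Γ (k - 1)

noncomputable def kpowAuxC (μ : Measure Ω) (Γ : Ω → Ω → ℂ) : ℕ → Ω → Ω → ℂ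
  | 0 => Γ
  | n + 1 => fun x y => ∫ z, Γ x z * kpowAuxC μ Γ n z y ∂μ

noncomputable def dpowC (μ : Measure Ω) (Γ : Ω → Ω → ℂ) (k : ℕ) : Ω → Ω → ℂ :=
  kpowAuxC μ Γ (k - 1)

/-- The set of points reachable from `x`. -/
def ReachOut (μ : Measure Ω) (Γ : Ω → Ω → ℝ) (x : Ω) : Set Ω :=
  {z | ∃ k : ℕ, 1 ≤ k ∧ 0 < dpow μ Γ k x z}

/-- The reachability sequence from `x` to `y`. -/
def reachSeq (μ : Measure Ω) (Γ : Ω → Ω → ℝ) (x y : Ω) : Set ℕ :=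
  {k : ℕ | 1 ≤ k ∧ 0 < dpow μ Γ k x y}

/-- A digraphon: a measurable kernel with values in `[0,1]`. -/
def IsDigraphon (Γ : Ω → Ω → ℝ) : Prop :=
  Measurable (Function.uncurry Γ) ∧ ∀ x y, Γ x y ∈ Set.Icc (0 : ℝ) 1

/-- `X` is strongly connected in `Γ`. -/
def StronglyConnectedIn (μ : Measure Ω) (Γ : Ω → Ω → ℝ) (X : Set Ω) : Prop :=
  MeasurableSet X ∧ 0 < μ X ∧
    ∀ A B : Set Ω, MeasurableSet A → MeasurableSet B → A ∪ B = X → Disjoint A B →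
      0 < μ A → 0 < μ B → 0 < ∫ x in A, ∫ y in B, Γ x y ∂μ ∂μ

/-- `X` is a strong component in `Γ`. -/
def StrongComponent (μ : Measure Ω) (Γ : Ω → Ω → ℝ) (X : Set Ω) : Prop :=
  StronglyConnectedIn μ Γ X ∧
    ∀ Y : Set Ω, MeasurableSet Y → 0 < μ (X ∩ Y) → 0 < μ (Y \ X) →
      ¬ StronglyConnectedIn μ Γ Y

/-- `X` is fragmented in `Γ`. -/
def Fragmented (μ : Measure Ω) (Γ : Ω → Ω → ℝ) (X : Set Ω) : Prop :=
  ∀ Y : Set Ω, Y ⊆ X → MeasurableSet Y → ¬ StronglyConnectedIn μ Γ Y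

/-- `τ` is an eigenvalue of the integral kernel operator of `Γ` on `L²(Ω;ℂ)`. -/
def IsEigenvalue (μ : Measure Ω) (Γ : Ω → Ω → ℝ) (τ : ℂ) : Prop :=
  ∃ f : Ω → ℂ, MemLp f 2 μ ∧ ¬(f =ᵐ[μ] 0) ∧
    ∀ᵐ x ∂μ, ∫ y, f y * (Γ y x : ℂ) ∂μ = τ * f x

/-- The spectral radius of `Γ` (`0` if there are no eigenvalues). -/
noncomputable def specRad (μ : Measure Ω) (Γ : Ω → Ω → ℝ) : ℝ :=
  sSup (insert 0 {r : ℝ | ∃ τ : ℂ, IsEigenvalue μ Γ τ ∧ ‖τ‖ = r})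

/-- The number of eigenvalues of modulus `specRad μ Γ`. -/
noncomputable def periphMult (μ : Measure Ω) (Γ : Ω → Ω → ℝ) : ℕ :=
  {τ : ℂ | IsEigenvalue μ Γ τ ∧ ‖τ‖ = specRad μ Γ}.ncard

/-- `P : ZMod d → Set Ω` witnesses graphical `d`-periodicity of `Γ`. -/
def IsPeriodicityWitness (μ : Measure Ω) (Γ : Ω → Ω → ℝ) {d : ℕ} (P : ZMod d → Set Ω) : Prop :=
  (∀ j, MeasurableSet (P j)) ∧ Pairwise (Disjoint on P) ∧ (⋃ j, P j) = Set.univ ∧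
    ∀ j : ZMod d, (μ.prod μ) {p : Ω × Ω | p.1 ∈ P j ∧ p.2 ∉ P (j + 1) ∧ Γ p.1 p.2 ≠ 0} = 0

/-- `Γ` is graphically `d`-periodic. -/
def GraphPeriodic (μ : Measure Ω) (Γ : Ω → Ω → ℝ) (d : ℕ) : Prop :=
  ∃ P : ZMod d → Set Ω, IsPeriodicityWitness μ Γ P

/-- `Γ` is aperiodic. -/
def Aperiodic (μ : Measure Ω) (Γ : Ω → Ω → ℝ) : Prop :=
  ∀ d : ℕ, 1 ≤ d → GraphPeriodic μ Γ d → d = 1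

/-- `S ⊆ ℕ` is eventually `D`-periodic with shift `s`. -/
def EvPeriodic (D : ℕ) (s : ℤ) (S : Set ℕ) : Prop :=
  (∀ n ∈ S, (D : ℤ) ∣ ((n : ℤ) - s)) ∧
    ∃ k : ℕ, ∀ n : ℕ, k ≤ n → (((D : ℤ) ∣ ((n : ℤ) - s)) ↔ n ∈ S)

/-- The homomorphism density `t(C_k, Γ)` of the directed `k`-cycle. -/
noncomputable def cycleDensity (μ : Measure Ω) (Γ : Ω → Ω → ℝ) (k : ℕ) : ℝ :=
  ∫ x : Fin k → Ω, ∏ i : Fin k, Γ (x i) (x (finRotate k i)) ∂(Measure.pi fun _ => μ)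

/-- `Γ⟦A⟧` : the kernel equal to `Γ` on `A × A` and `0` elsewhere. -/
noncomputable def kerRestrict (Γ : Ω → Ω → ℝ) (A : Set Ω) : Ω → Ω → ℝ :=
  fun x y => (A ×ˢ A).indicator (Function.uncurry Γ) (x, y)

/-- Equality of sets modulo a `μ`-nullset. -/
def AEEqSet (μ : Measure Ω) (A B : Set Ω) : Prop := μ ((A \ B) ∪ (B \ A)) = 0

/-- The normalized restriction of `μ` to `A`, as a measure on `↥A`. -/
noncomputable def subMeasure (μ : Measure Ω) (A : Set Ω) : Measure ↥A :=
  (μ A)⁻¹ • Measure.comap Subtype.val μ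

/-- The restriction of a kernel to `A × A`, as a kernel on `↥A`. -/
def subKernel (Γ : Ω → Ω → ℝ) (A : Set Ω) : ↥A → ↥A → ℝ :=
  fun a b => Γ ↑a ↑b

/-- A finite oriented graph: no pair of antiparallel edges (in particular no loops). -/
structure OrientedGraph where
  n : ℕ
  E : Finset (Fin n × Fin n)
  no_anti : ∀ e ∈ E, (e.2, e.1) ∉ E

/-- The homomorphism density `t(D, Γ)` of an oriented graph `D`. -/
noncomputable def homDensity (μ : Measure Ω) (Γ : Ω → Ω → ℝ) (D : OrientedGraph) : ℝ :=
  ∫ x : Fin D.n → Ω, ∏ e ∈ D.E, Γ (x e.1) (x e.2) ∂(Measure.pi fun _ => μ)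

/-- The cut norm distance of two kernels. -/
noncomputable def cutNormDist (μ : Measure Ω) (U W : Ω → Ω → ℝ) : ℝ :=
  sSup {r : ℝ | ∃ S T : Set Ω, MeasurableSet S ∧ MeasurableSet T ∧
    r = |∫ x in S, ∫ y in T, (U x y - W x y) ∂μ ∂μ|}

/-- The cut distance of two kernels. -/
noncomputable def cutDist (μ : Measure Ω) (U W : Ω → Ω → ℝ) : ℝ :=
  sInf {r : ℝ | ∃ e : Ω ≃ᵐ Ω, MeasurePreserving e μ μ ∧
    r = cutNormDist μ U (fun x y => W (e x) (e y))}


theorem aux_closed {Ω : Type*} [MeasurableSpace Ω] (μ : Measure Ω) [IsProbabilityMeasure μ]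
    (Γ : Ω → Ω → ℝ) (hconn : StronglyConnectedIn μ Γ Set.univ) (A : Set Ω)
    (hA : MeasurableSet A)
    (h : ∀ᵐ p ∂(μ.prod μ), Γ p.1 p.2 ≠ 0 → p.1 ∈ A → p.2 ∈ A) (h0 : μ A ≠ 0) :
    μ Aᶜ = 0 := by
  by_contra h1
  have h2 := hconn.2.2 A Aᶜ hA hA.compl (Set.union_compl_self A) disjoint_compl_right
    (pos_iff_ne_zero.2 h0) (pos_iff_ne_zero.2 h1)
  have h3 : ∫ x in A, ∫ y in Aᶜ, Γ x y ∂μ ∂μ = 0 := by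
    apply integral_eq_zero_of_ae
    rw [Filter.EventuallyEq, ae_restrict_iff' hA]
    filter_upwards [Measure.ae_ae_of_ae_prod h] with x hx hxA
    apply integral_eq_zero_of_ae
    rw [Filter.EventuallyEq, ae_restrict_iff' hA.compl]
    filter_upwards [hx] with y hy hyA
    by_contra hne
    exact hyA (hy hne hxA)
  exact h2.ne' h3

theorem aux_edge {Ω : Type*} [MeasurableSpace Ω] (μ : Measure Ω) [IsProbabilityMeasure μ]
    (Γ : Ω → Ω → ℝ) {D : ℕ} (P : ZMod D → Set Ω) (hP : IsPeriodicityWitness μ Γ P) :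
    ∀ᵐ p ∂(μ.prod μ), Γ p.1 p.2 ≠ 0 → ∀ j, p.1 ∈ P j → p.2 ∈ P (j + 1) := by
  have : Countable (ZMod D) := by
    cases D
    · exact inferInstanceAs (Countable ℤ)
    · exact inferInstanceAs (Countable (Fin _))
  have h : ∀ j, ∀ᵐ p ∂(μ.prod μ), ¬ (p.1 ∈ P j ∧ p.2 ∉ P (j + 1) ∧ Γ p.1 p.2 ≠ 0) := by
    intro j
    rw [ae_iff]
    simpa using hP.2.2.2 j
  filter_upwards [ae_all_iff.2 h] with p hp hne j hj
  by_contra hn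
  exact hp j ⟨hj, hn, hne⟩

theorem aux_zero {Ω : Type*} [MeasurableSpace Ω] (μ : Measure Ω) [IsProbabilityMeasure μ]
    (Γ : Ω → Ω → ℝ) (h : ∀ᵐ p ∂(μ.prod μ), Γ p.1 p.2 = 0) : periphMult μ Γ = 1 := by
  have h' : ∀ᵐ p ∂(μ.prod μ), Γ p.2 p.1 = 0 := by
    have := (Measure.measurePreserving_swap (μ := μ) (ν := μ)).quasiMeasurePreserving.ae h
    simpa using this
  have hT : ∀ f : Ω → ℂ, ∀ᵐ x ∂μ, ∫ y, f y * (Γ y x : ℂ) ∂μ = 0 := by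
    intro f
    filter_upwards [Measure.ae_ae_of_ae_prod h'] with x hx
    apply integral_eq_zero_of_ae
    filter_upwards [hx] with y hy
    simp [hy]
  have hE : ∀ τ : ℂ, IsEigenvalue μ Γ τ ↔ τ = 0 := by
    intro τ
    constructor
    · rintro ⟨f, -, hf0, hf⟩
      by_contra hτ
      apply hf0
      filter_upwards [hf, hT f] with x h1 h2
      rw [h2] at h1
      simpa [hτ] using h1.symm
    · rintro rfl
      refine ⟨fun _ => 1, memLp_const 1, ?_, ?_⟩
      · intro hh
        have : ∀ᵐ x ∂μ, False := by
          filter_upwards [hh] with x hx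
          simp at hx
        exact IsProbabilityMeasure.ne_zero μ (by simpa using this)
      · filter_upwards [hT fun _ => 1] with x hx
        simpa using hx
  have hs : specRad μ Γ = 0 := by
    have : (insert 0 {r : ℝ | ∃ τ : ℂ, IsEigenvalue μ Γ τ ∧ ‖τ‖ = r}) = {0} := by
      ext r
      simp [hE, eq_comm]
    rw [specRad, this, csSup_singleton]
  have : {τ : ℂ | IsEigenvalue μ Γ τ ∧ ‖τ‖ = specRad μ Γ} = {0} := by
    ext τ
    simp [hE, hs]
  rw [periphMult, this, Set.ncard_singleton]

theorem aux_eq {Ω : Type*} {D : ℕ} {P : ZMod D → Set Ω} (hd : Pairwise (Disjoint on P))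
    {i j : ZMod D} {x : Ω} (hi : x ∈ P i) (hj : x ∈ P j) : i = j := by
  by_contra hne
  exact Set.disjoint_left.1 (hd hne) hi hj

theorem aux_pos {Ω : Type*} [MeasurableSpace Ω] (μ : Measure Ω) [IsProbabilityMeasure μ]
    (Γ : Ω → Ω → ℝ) (hconn : StronglyConnectedIn μ Γ Set.univ)
    (D : ℕ) (hD : periphMult μ Γ = D)
    (P : ZMod D → Set Ω) (hP : IsPeriodicityWitness μ Γ P) (i : ZMod D) : μ (P i) ≠ 0 := by
  have hc : Countable (ZMod D) := by
    cases D
    · exact inferInstanceAs (Countable ℤ)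
    · exact inferInstanceAs (Countable (Fin _))
  have hedge := aux_edge μ Γ P hP
  obtain ⟨hm, hdis, hun, -⟩ := hP
  have hex : ∃ j, μ (P j) ≠ 0 := by
    by_contra! hn
    have := measure_iUnion_null hn
    rw [hun] at this
    simp at this
  by_cases h0 : ∀ᵐ p ∂(μ.prod μ), Γ p.1 p.2 = 0
  · have h1 := aux_zero μ Γ h0
    obtain rfl : D = 1 := hD.symm.trans h1
    obtain ⟨j, hj⟩ := hex
    rwa [Subsingleton.elim i j]
  have hstep : ∀ j, μ (P j) ≠ 0 → μ (P (j + 1)) ≠ 0 := by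
    intro j hj hj1
    apply h0
    have hnot : ∀ᵐ p ∂(μ.prod μ), p.2 ∉ P (j + 1) :=
      Measure.quasiMeasurePreserving_snd.ae (measure_eq_zero_iff_ae_notMem.1 hj1)
    have hfull : μ (P j)ᶜ = 0 := by
      apply aux_closed μ Γ hconn _ (hm j) _ hj
      filter_upwards [hedge, hnot] with p h1 h2 h3 h4
      exact absurd (h1 h3 j h4) h2
    have hin : ∀ᵐ p ∂(μ.prod μ), p.1 ∉ (P j)ᶜ :=
      Measure.quasiMeasurePreserving_fst.ae (measure_eq_zero_iff_ae_notMem.1 hfull)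
    filter_upwards [hedge, hnot, hin] with p h1 h2 h3
    by_contra h4
    exact h2 (h1 h4 j (not_not.1 h3))
  obtain ⟨j, hj⟩ := hex
  have hall : ∀ n : ℕ, μ (P (j + n)) ≠ 0 := by
    intro n
    induction n with
    | zero => simpa using hj
    | succ n ih =>
      have := hstep _ ih
      rwa [add_assoc, ← Nat.cast_succ] at this
  rcases Nat.eq_zero_or_pos D with rfl | hpos
  · exfalso
    have hA : MeasurableSet (⋃ n : ℕ, P (j + 1 + n)) := MeasurableSet.iUnion fun n => hm _
    have hcl : μ (⋃ n : ℕ, P (j + 1 + n))ᶜ = 0 := by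
      apply aux_closed μ Γ hconn _ hA
      · filter_upwards [hedge] with p h1 h2 h3
        obtain ⟨n, hn⟩ := Set.mem_iUnion.1 h3
        refine Set.mem_iUnion.2 ⟨n + 1, ?_⟩
        have := h1 h2 _ hn
        rwa [add_assoc, ← Nat.cast_succ] at this
      · intro hz
        have := hall 1
        apply this
        refine measure_mono_null ?_ hz
        intro x hx
        exact Set.mem_iUnion.2 ⟨0, by simpa using hx⟩
    apply hj
    refine measure_mono_null ?_ hcl
    intro x hx hx'
    obtain ⟨n, hn⟩ := Set.mem_iUnion.1 hx'
    have h5 : j = j + 1 + (n : ZMod 0) := aux_eq hdis hx hn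
    have h6 : ((n + 1 : ℕ) : ZMod 0) = 0 := by
      push_cast
      linear_combination -h5
    have h7 := (ZMod.natCast_eq_zero_iff (n + 1) 0).1 h6
    simp at h7
  · have : NeZero D := ⟨hpos.ne'⟩
    have := hall (i - j).val
    simpa using this

/-- For a strongly connected digraphon of peripheral multiplicity `D`, the
partition witnessing graphical `D`-periodicity is unique up to a cyclic shift. -/
theorem periodicity_witness_unique_up_to_cyclic_shift
    {Ω : Type*} [MeasurableSpace Ω] (μ : Measure Ω) [IsProbabilityMeasure μ]
    (Γ : Ω → Ω → ℝ) (hΓ : IsDigraphon Γ)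
    (hconn : StronglyConnectedIn μ Γ Set.univ)
    (D : ℕ) (hD : periphMult μ Γ = D)
    (P Q : ZMod D → Set Ω)
    (hP : IsPeriodicityWitness μ Γ P) (hQ : IsPeriodicityWitness μ Γ Q) :
    ∃ s : ℤ, ∀ i j : ZMod D, (AEEqSet μ (P i) (Q j) ↔ i = j + (s : ZMod D)) := by
  have hc : Countable (ZMod D) := by
    cases D
    · exact inferInstanceAs (Countable ℤ)
    · exact inferInstanceAs (Countable (Fin _))
  have hpos := aux_pos μ Γ hconn D hD P hP
  have heP := aux_edge μ Γ P hP
  have heQ := aux_edge μ Γ Q hQ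
  obtain ⟨hmP, hdP, huP, -⟩ := hP
  obtain ⟨hmQ, hdQ, huQ, -⟩ := hQ
  have hex : ∃ s : ZMod D, μ (⋃ k, P (k + s) ∩ Q k) ≠ 0 := by
    by_contra! hn
    have h1 := measure_iUnion_null hn
    have h2 : (⋃ s : ZMod D, ⋃ k, P (k + s) ∩ Q k) = Set.univ := by
      refine Set.eq_univ_of_forall fun x => ?_
      obtain ⟨a, ha⟩ := Set.mem_iUnion.1 (huP.symm ▸ Set.mem_univ x)
      obtain ⟨b, hb⟩ := Set.mem_iUnion.1 (huQ.symm ▸ Set.mem_univ x)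
      exact Set.mem_iUnion.2 ⟨a - b, Set.mem_iUnion.2 ⟨b, by simpa using ha, hb⟩⟩
    rw [h2] at h1
    simp at h1
  obtain ⟨s, hs⟩ := hex
  have hfull : μ (⋃ k, P (k + s) ∩ Q k)ᶜ = 0 := by
    apply aux_closed μ Γ hconn _ (MeasurableSet.iUnion fun k => (hmP _).inter (hmQ _)) _ hs
    filter_upwards [heP, heQ] with p h1 h2 h3 h4
    obtain ⟨k, hk1, hk2⟩ := Set.mem_iUnion.1 h4
    refine Set.mem_iUnion.2 ⟨k + 1, ?_, h2 h3 _ hk2⟩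
    have := h1 h3 _ hk1
    rwa [add_right_comm] at this
  have hiff : ∀ x ∈ ⋃ k, P (k + s) ∩ Q k, ∀ j, x ∈ P (j + s) ↔ x ∈ Q j := by
    intro x hx j
    obtain ⟨k, hk1, hk2⟩ := Set.mem_iUnion.1 hx
    constructor
    · intro h
      rwa [add_right_cancel (aux_eq hdP h hk1)]
    · intro h
      rwa [aux_eq hdQ h hk2]
  obtain ⟨t, rfl⟩ := ZMod.intCast_surjective s
  refine ⟨t, fun i j => ⟨fun h => ?_, ?_⟩⟩
  · by_contra hne
    apply hpos i
    refine measure_mono_null ?_ (measure_union_null h hfull)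
    intro x hx
    by_cases hxR : x ∈ ⋃ k, P (k + (t : ZMod D)) ∩ Q k
    · refine Or.inl (Or.inl ⟨hx, fun hq => hne ?_⟩)
      exact aux_eq hdP hx ((hiff x hxR j).2 hq)
    · exact Or.inr hxR
  · rintro rfl
    refine measure_mono_null ?_ hfull
    intro x hx hxR
    have := hiff x hxR j
    rcases hx with hx | hx
    · exact hx.2 (this.1 hx.1)
    · exact hx.2 (this.2 hx.1)

end Digraphon
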